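/- There exist a finite alphabet Σ, an LMC ℳ with 10 states over Σ, and an LMC ℳ' with 8 states over Σ, such that ℳ' covers ℳ, but there is no LMC ℳ* over Σ with fewer than 10 states that covers ℳ and satisfies rk(ℳ*) = rk(ℳ). (This answers Paz's 1971 question negatively.) -/

import Mathlib

open Matrix

/-- `μ` is (the transition function of) a labelled Markov chain: all entries lie in
`[0,1]` and `∑_{σ ∈ Σ} μ(σ)` is row-stochastic. -/
def IsLMC {A S : Type} [Fintype A] [Fintype S] (μ : A → Matrix S S ℝ) : Prop :=
  (∀ a i j, 0 ≤ μ a i j) ∧ (∀ a i j, μ a i j ≤ 1) ∧ (∀ i, ∑ a, ∑ j, μ a i j = 1)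

/-- Transition matrix of a labelled Markov chain extended to words:
`μ(σ₁…σ_k) = μ(σ₁) ⋯ μ(σ_k)`, with `μ(ε) = I`. -/
noncomputable def lmcWord {A S : Type} [Fintype S] [DecidableEq S]
    (μ : A → Matrix S S ℝ) (w : List A) : Matrix S S ℝ :=
  (w.map μ).prod

/-- Entry of the backward matrix: `(B_ℳ)_{i,w} = e_i^⊤ μ(w) 𝟙`. -/
noncomputable def lmcB {A S : Type} [Fintype S] [DecidableEq S]
    (μ : A → Matrix S S ℝ) (i : S) (w : List A) : ℝ :=
  ∑ j, lmcWord μ w i j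

/-- The rank of an LMC: the dimension of the span of the columns of its backward matrix. -/
noncomputable def lmcRank {A S : Type} [Fintype S] [DecidableEq S]
    (μ : A → Matrix S S ℝ) : ℕ :=
  Module.finrank ℝ
    (Submodule.span ℝ (Set.range fun w : List A => fun i : S => lmcB μ i w))

/-- `ℳ'` (with transitions `μ'`) covers `ℳ` (with transitions `μ`) iff there is a
row-stochastic matrix `C` with `C · B_{ℳ'} = B_ℳ`. -/
def lmcCovers {A S S' : Type} [Fintype S] [DecidableEq S] [Fintype S'] [DecidableEq S']
    (μ' : A → Matrix S' S' ℝ) (μ : A → Matrix S S ℝ) : Prop :=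
  ∃ C : S → S' → ℝ, (∀ i l, 0 ≤ C i l) ∧ (∀ i, ∑ l, C i l = 1) ∧
    ∀ i (w : List A), ∑ l, C i l * lmcB μ' l w = lmcB μ i w



/-- Slacks at the ten vertices of the cube `[0,2]^3` cut by `x+y+z ≤ 5`
(facets `x, y, z, 2-x, 2-y, 2-z, 5-x-y-z`, and the extra column `x+y+z`). -/
def pzV : Fin 10 → Fin 8 → ℕ :=
  ![![0,0,0,2,2,2,5,0], ![2,0,0,0,2,2,3,2], ![0,2,0,2,0,2,3,2], ![0,0,2,2,2,0,3,2],
    ![2,2,0,0,0,2,1,4], ![2,0,2,0,2,0,1,4], ![0,2,2,2,0,0,1,4],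
    ![1,2,2,1,0,0,0,5], ![2,1,2,0,1,0,0,5], ![2,2,1,0,0,1,0,5]]

noncomputable def pzS (i : Fin 10) (a : Fin 8) : ℝ := (pzV i a : ℝ) / 11

noncomputable def pzM (a : Fin 8) : Matrix (Fin 10) (Fin 10) ℝ :=
  fun i j => if j = 0 then pzS i a else 0

noncomputable def pzN (a : Fin 8) : Matrix (Fin 8) (Fin 8) ℝ :=
  fun l j => if l = a then pzS 0 j else 0

theorem pzV_sum : ∀ i, ∑ a, pzV i a = 11 := by decide

theorem pzV_inj : ∀ i j, pzV i 0 = pzV j 0 → pzV i 1 = pzV j 1 → pzV i 2 = pzV j 2 → i = j := by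
  decide

theorem pzS_sum (i : Fin 10) : ∑ a, pzS i a = 1 := by
  unfold pzS
  rw [← Finset.sum_div, ← Nat.cast_sum, pzV_sum]; norm_num

theorem pzS_nonneg (i : Fin 10) (a : Fin 8) : 0 ≤ pzS i a := by unfold pzS; positivity

theorem pzS_le (i : Fin 10) (a : Fin 8) : pzS i a ≤ 1 := by
  rw [← pzS_sum i]
  exact Finset.single_le_sum (fun b _ => pzS_nonneg i b) (Finset.mem_univ a)

theorem lmcB_nil {A S : Type} [Fintype S] [DecidableEq S] (μ : A → Matrix S S ℝ) (i : S) :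
    lmcB μ i [] = 1 := by
  simp [lmcB, lmcWord, Matrix.one_apply]

theorem lmcB_cons {A S : Type} [Fintype S] [DecidableEq S] (μ : A → Matrix S S ℝ) (i : S)
    (a : A) (w : List A) : lmcB μ i (a :: w) = ∑ j, μ a i j * lmcB μ j w := by
  simp only [lmcB, lmcWord, List.map_cons, List.prod_cons, Matrix.mul_apply, Finset.mul_sum]
  rw [Finset.sum_comm]

theorem pzM_cons (i : Fin 10) (a : Fin 8) (w : List (Fin 8)) :
    lmcB pzM i (a :: w) = pzS i a * lmcB pzM 0 w := by
  simp [lmcB_cons, pzM]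

theorem pzN_cons (l a : Fin 8) (w : List (Fin 8)) :
    lmcB pzN l (a :: w) = if l = a then ∑ j, pzS 0 j * lmcB pzN j w else 0 := by
  rw [lmcB_cons]; split_ifs with h <;> simp [pzN, h]

theorem pz_cover (i : Fin 10) (w : List (Fin 8)) :
    ∑ l, pzS i l * lmcB pzN l w = lmcB pzM i w := by
  induction w generalizing i with
  | nil => simp [lmcB_nil, pzS_sum]
  | cons a w ih => simp [pzN_cons, pzM_cons, ih]

/-- If the rank is preserved, the covering map is injective on the column space. -/
theorem pz_inj {k : ℕ} {m : ℕ} {ι : Type} (f : (Fin k → ℝ) →ₗ[ℝ] (Fin m → ℝ))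
    (g : ι → Fin k → ℝ) (h : ι → Fin m → ℝ) (hf : ∀ w, f (g w) = h w)
    (hr : Module.finrank ℝ (Submodule.span ℝ (Set.range g))
      = Module.finrank ℝ (Submodule.span ℝ (Set.range h)))
    (v : Fin k → ℝ) (hv : v ∈ Submodule.span ℝ (Set.range g)) (h0 : f v = 0) : v = 0 := by
  have hm : (Submodule.span ℝ (Set.range g)).map f = Submodule.span ℝ (Set.range h) := by
    rw [Submodule.map_span, ← Set.range_comp]
    congr 2
    ext1 w
    exact hf w
  have h1 := LinearMap.finrank_range_add_finrank_ker (f.domRestrict (Submodule.span ℝ (Set.range g)))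
  rw [LinearMap.range_domRestrict, hm, hr] at h1
  have h2 : LinearMap.ker (f.domRestrict (Submodule.span ℝ (Set.range g))) = ⊥ := by
    apply Submodule.finrank_eq_zero.mp; omega
  have h3 : (⟨v, hv⟩ : Submodule.span ℝ (Set.range g)) ∈
      LinearMap.ker (f.domRestrict (Submodule.span ℝ (Set.range g))) := by
    simpa [LinearMap.mem_ker] using h0
  rw [h2, Submodule.mem_bot] at h3
  exact congrArg Subtype.val h3

/-- A row in the affine hull vanishing where row `i` vanishes equals row `i`. -/
theorem pz_det (i : Fin 10) (q : Fin 8 → ℝ)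
    (e0 : q 0 + q 3 = 2 / 11) (e1 : q 1 + q 4 = 2 / 11) (e2 : q 2 + q 5 = 2 / 11)
    (e3 : q 0 + q 1 + q 2 + q 6 = 5 / 11)
    (hz : ∀ a, pzV i a = 0 → q a = 0) :
    q 0 = pzS i 0 ∧ q 1 = pzS i 1 ∧ q 2 = pzS i 2 := by
  have z0 := hz 0
  have z1 := hz 1
  have z2 := hz 2
  have z3 := hz 3
  have z4 := hz 4
  have z5 := hz 5
  have z6 := hz 6
  clear hz
  fin_cases i <;> simp [pzV, pzS] at z0 z1 z2 z3 z4 z5 z6 ⊢ <;>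
    refine ⟨?_, ?_, ?_⟩ <;> linarith

theorem pz_rel : ∀ i, pzV i 0 + pzV i 3 = 2 ∧ pzV i 1 + pzV i 4 = 2 ∧ pzV i 2 + pzV i 5 = 2 ∧
    pzV i 0 + pzV i 1 + pzV i 2 + pzV i 6 = 5 := by decide

theorem pz_lower (k : ℕ) (hk : k < 10) (μs : Fin 8 → Matrix (Fin k) (Fin k) ℝ)
    (hL : IsLMC μs) (hc : lmcCovers μs pzM) (hr : lmcRank μs = lmcRank pzM) : False := by
  obtain ⟨C, hC0, hC1, hC⟩ := hc
  set f : (Fin k → ℝ) →ₗ[ℝ] (Fin 10 → ℝ) := (Matrix.of C).mulVecLin with hfdef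
  have hf : ∀ w, f (fun l => lmcB μs l w) = fun i => lmcB pzM i w := by
    intro w; ext i
    rw [← hC i w]
    simp [hfdef, Matrix.mulVec, dotProduct]
  have inj := pz_inj f (fun w l => lmcB μs l w) (fun w i => lmcB pzM i w) hf hr
  have mem : ∀ w, (fun l => lmcB μs l w) ∈
      Submodule.span ℝ (Set.range (fun (w : List (Fin 8)) l => lmcB μs l w)) :=
    fun w => Submodule.subset_span ⟨w, rfl⟩
  have hM : ∀ i a, lmcB pzM i [a] = pzS i a := by
    intro i a; rw [pzM_cons, lmcB_nil, mul_one]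
  have two : ∀ a b : Fin 8, (∀ i, pzV i a + pzV i b = 2) →
      ∀ l, lmcB μs l [a] + lmcB μs l [b] = 2 / 11 := by
    intro a b hab l
    have := inj ((fun l => lmcB μs l [a]) + (fun l => lmcB μs l [b])
        - (2 / 11 : ℝ) • (fun l => lmcB μs l []))
      (sub_mem (add_mem (mem _) (mem _)) (Submodule.smul_mem _ _ (mem _)))
      (by
        rw [map_sub, map_add, map_smul, hf, hf, hf]
        ext i
        have h : (pzV i a : ℝ) + pzV i b = 2 := by exact_mod_cast hab i
        simp only [Pi.sub_apply, Pi.add_apply, Pi.smul_apply, hM, lmcB_nil, pzS, smul_eq_mul,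
          Pi.zero_apply]
        linarith)
    have h := congrFun this l
    simp only [Pi.sub_apply, Pi.add_apply, Pi.smul_apply, lmcB_nil, smul_eq_mul,
      Pi.zero_apply] at h
    linarith
  have five : ∀ l, lmcB μs l [0] + lmcB μs l [1] + lmcB μs l [2] + lmcB μs l [6] = 5 / 11 := by
    intro l
    have := inj ((fun l => lmcB μs l [0]) + (fun l => lmcB μs l [1]) + (fun l => lmcB μs l [2])
        + (fun l => lmcB μs l [6]) - (5 / 11 : ℝ) • (fun l => lmcB μs l []))
      (sub_mem (add_mem (add_mem (add_mem (mem _) (mem _)) (mem _)) (mem _))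
        (Submodule.smul_mem _ _ (mem _)))
      (by
        rw [map_sub, map_add, map_add, map_add, map_smul, hf, hf, hf, hf, hf]
        ext i
        have h : (pzV i 0 : ℝ) + pzV i 1 + pzV i 2 + pzV i 6 = 5 := by
          exact_mod_cast (pz_rel i).2.2.2
        simp only [Pi.sub_apply, Pi.add_apply, Pi.smul_apply, hM, lmcB_nil, pzS, smul_eq_mul,
          Pi.zero_apply]
        linarith)
    have h := congrFun this l
    simp only [Pi.sub_apply, Pi.add_apply, Pi.smul_apply, lmcB_nil, smul_eq_mul,
      Pi.zero_apply] at h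
    linarith
  have nn : ∀ l a, 0 ≤ lmcB μs l [a] := by
    intro l a
    simp only [lmcB_cons, lmcB_nil, mul_one]
    exact Finset.sum_nonneg fun j _ => hL.1 a l j
  have ex : ∀ i, ∃ l, 0 < C i l := by
    intro i
    by_contra hcon
    push Not at hcon
    have : ∑ l, C i l ≤ 0 := Finset.sum_nonpos fun l _ => hcon l
    linarith [hC1 i]
  choose φ hφ using ex
  have key : ∀ i, lmcB μs (φ i) [0] = pzS i 0 ∧ lmcB μs (φ i) [1] = pzS i 1 ∧
      lmcB μs (φ i) [2] = pzS i 2 := by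
    intro i
    refine pz_det i (fun a => lmcB μs (φ i) [a]) (two 0 3 (fun i => (pz_rel i).1) _)
      (two 1 4 (fun i => (pz_rel i).2.1) _) (two 2 5 (fun i => (pz_rel i).2.2.1) _) (five _) ?_
    intro a ha
    have h := hC i [a]
    rw [hM, pzS, ha, Nat.cast_zero, zero_div,
      Finset.sum_eq_zero_iff_of_nonneg (fun l _ => mul_nonneg (hC0 i l) (nn l a))] at h
    exact (mul_eq_zero.mp (h (φ i) (Finset.mem_univ _))).resolve_left (hφ i).ne'
  have hinj : Function.Injective φ := by
    intro i j hij
    obtain ⟨a0, a1, a2⟩ := key i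
    obtain ⟨b0, b1, b2⟩ := key j
    rw [hij] at a0 a1 a2
    have cv : ∀ a, pzS i a = pzS j a → pzV i a = pzV j a := by
      intro a h
      unfold pzS at h
      have h' : (pzV i a : ℝ) = pzV j a := by linarith
      exact_mod_cast h'
    exact pzV_inj i j (cv 0 (a0.symm.trans b0)) (cv 1 (a1.symm.trans b1))
      (cv 2 (a2.symm.trans b2))
  have := Fintype.card_le_of_injective φ hinj
  simp at this
  omega

/-- Negative answer to Paz's 1971 question: there are a finite alphabet `Σ`, an LMC `ℳ`
with 10 states and an LMC `ℳ'` with 8 states over `Σ` such that `ℳ'` covers `ℳ`, yet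
no LMC `ℳ*` over `Σ` with fewer than 10 states covers `ℳ` while having the same rank
as `ℳ`. -/
theorem stmt9 :
    ∃ (σ : ℕ) (μ : Fin σ → Matrix (Fin 10) (Fin 10) ℝ)
      (μ' : Fin σ → Matrix (Fin 8) (Fin 8) ℝ),
      IsLMC μ ∧ IsLMC μ' ∧ lmcCovers μ' μ ∧
      ¬ ∃ (k : ℕ), k < 10 ∧ ∃ μs : Fin σ → Matrix (Fin k) (Fin k) ℝ,
          IsLMC μs ∧ lmcCovers μs μ ∧ lmcRank μs = lmcRank μ := by
  refine ⟨8, pzM, pzN, ⟨?_, ?_, ?_⟩, ⟨?_, ?_, ?_⟩,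
    ⟨pzS, pzS_nonneg, pzS_sum, pz_cover⟩, ?_⟩
  · intro a i j; unfold pzM; split_ifs
    · exact pzS_nonneg _ _
    · exact le_rfl
  · intro a i j; unfold pzM; split_ifs
    · exact pzS_le _ _
    · exact zero_le_one
  · intro i; simp [pzM, pzS_sum]
  · intro a i j; unfold pzN; split_ifs
    · exact pzS_nonneg _ _
    · exact le_rfl
  · intro a i j; unfold pzN; split_ifs
    · exact pzS_le _ _
    · exact zero_le_one
  · intro i
    rw [Finset.sum_comm]
    simp [pzN, pzS_sum]
  · rintro ⟨k, hk, μs, hL, hc, hr⟩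
    exact pz_lower k hk μs hL hc hr
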